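/- Let 1 < γ ≤ 2, δ = 1/(γ−1), and let (G, u, v, U, V) be γ-good. Let x ∈ V, let y be a vertex not in U ∪ V, let G′ be the graph obtained from G by adding the edge xy, and set U′ = U ∪ {y}, U₁′ = U′ ∖ N_{G′}(v) and V₁ = V ∖ N_{G′}(u). Suppose U₁′ ∪ V₁ ≠ ∅, |U′| ≤ γ|V| + δ, and |V| ≤ γ|U′| + δ. Then there exists a pair of nonadjacent vertices a, b of G′ such that (G′ + ab, u, v, U′, V) is γ-good. -/

import Mathlib

open SimpleGraph

/-- The graph obtained from `G` by adding the edge `xy`. -/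
def addEdge {α : Type*} (G : SimpleGraph α) (x y : α) : SimpleGraph α :=
  G ⊔ SimpleGraph.fromEdgeSet {s(x, y)}

/-- `b_U = |V₁| + |U| − γ|V| − δ`, where `V₁ = V ∖ N_G(u)` and `δ = 1/(γ−1)`. -/
noncomputable def bU {α : Type*} (γ : ℝ) (G : SimpleGraph α) (u : α) (U V : Set α) : ℝ :=
  ((V \ G.neighborSet u).ncard : ℝ) + U.ncard - γ * V.ncard - 1 / (γ - 1)

/-- `b_V = |U₁| + |V| − γ|U| − δ`, where `U₁ = U ∖ N_G(v)` and `δ = 1/(γ−1)`. -/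
noncomputable def bV {α : Type*} (γ : ℝ) (G : SimpleGraph α) (v : α) (U V : Set α) : ℝ :=
  ((U \ G.neighborSet v).ncard : ℝ) + V.ncard - γ * U.ncard - 1 / (γ - 1)

/-- The tuple `(G, u, v, U, V)` is `γ`-good. -/
def GammaGood {α : Type*} (γ : ℝ) (G : SimpleGraph α) (u v : α) (U V : Set α) : Prop :=
  G.Adj u v ∧ u ∈ U ∧ v ∈ V ∧ Disjoint U V ∧
  -- (1*): exactly one connected component contains an edge, its vertex set is `U ∪ V`,
  -- and it is bipartite with parts `U` and `V` (both independent sets)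
  (∃! c : G.ConnectedComponent, ∃ x y, G.Adj x y ∧ G.connectedComponentMk x = c) ∧
  {w | G.connectedComponentMk w = G.connectedComponentMk u} = U ∪ V ∧
  (∀ a ∈ U, ∀ b ∈ U, ¬ G.Adj a b) ∧
  (∀ a ∈ V, ∀ b ∈ V, ¬ G.Adj a b) ∧
  -- (2*): every vertex of `U ∪ V` has a neighbor in `U₀ ∪ V₀ = N(v) ∪ N(u)`
  (∀ w ∈ U ∪ V, ∃ z ∈ G.neighborSet v ∪ G.neighborSet u, G.Adj w z) ∧
  -- (3*) and (4*)
  bU γ G u U V ≤ 0 ∧ bV γ G v U V ≤ 0 ∧ bU γ G u U V + bV γ G v U V ≤ -2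

/-! A vertex dominated as in (2*) is joined to `u` through its neighbor in `N(u) ∪ N(v)`, so the
connectedness in (1*) is automatic, and goodness amounts to a bipartite domination condition plus
the bounds on `b_U` and `b_V`. Replacing `U` by `U ∪ {y}` raises `b_U` by one and lowers `b_V` by at
least `γ - 1`. If `u` misses a vertex of `V`, an edge from `u` to such a vertex (to `x`, when `u`
misses `x`) restores `b_U`. Otherwise `V₁` is empty and `b_U ≤ 0` is the size hypothesis on
`U ∪ {y}`; an edge at `v` then lowers `b_V` by one, which restores the sum `b_U + b_V`. -/

/-- The qualitative part of `γ`-goodness: `G` is bipartite with parts `U ∋ u` and `V`, and every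
vertex of `U ∪ V` has a neighbor adjacent to an end of the edge `uv`. Connectedness of `U ∪ V` and
`v ∈ V` follow, so they are not fields. -/
structure IsDominatingEdge {α : Type*} (G : SimpleGraph α) (u v : α) (U V : Set α) : Prop where
  isBipartiteWith : G.IsBipartiteWith U V
  left_mem : u ∈ U
  adj : G.Adj u v
  exists_adj : ∀ w ∈ U ∪ V, ∃ z ∈ G.neighborSet v ∪ G.neighborSet u, G.Adj w z

/-- The quantitative part of `γ`-goodness: conditions (3*) and (4*). -/
structure IsBalanced {α : Type*} (γ : ℝ) (G : SimpleGraph α) (u v : α) (U V : Set α) : Prop where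
  bU_nonpos : bU γ G u U V ≤ 0
  bV_nonpos : bV γ G v U V ≤ 0
  bU_add_bV_le : bU γ G u U V + bV γ G v U V ≤ -2

section

variable {α : Type*} {G H : SimpleGraph α} {U V : Set α} {u v x y a b c : α} {γ : ℝ}

theorem addEdge_adj : (addEdge G x y).Adj a b ↔
    G.Adj a b ∨ (a = x ∧ b = y ∨ a = y ∧ b = x) ∧ a ≠ b := by
  simp [addEdge]

theorem addEdge_adj_of_ne (hx : a ≠ x) (hy : a ≠ y) :
    (addEdge G x y).Adj a b ↔ G.Adj a b := by
  simp [addEdge_adj, hx, hy]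

theorem addEdge_adj_self (h : a ≠ b) : (addEdge G a b).Adj a b :=
  addEdge_adj.2 (.inr ⟨.inl ⟨rfl, rfl⟩, h⟩)

theorem le_addEdge : G ≤ addEdge G x y :=
  le_sup_left

theorem addEdge_comm (G : SimpleGraph α) (x y : α) : addEdge G x y = addEdge G y x := by
  rw [addEdge, addEdge, Sym2.eq_swap]

theorem addEdge_right_comm (G : SimpleGraph α) (x y a b : α) :
    addEdge (addEdge G x y) a b = addEdge (addEdge G a b) x y :=
  sup_right_comm ..

theorem neighborSet_addEdge_left (h : a ≠ b) :
    (addEdge G a b).neighborSet a = insert b (G.neighborSet a) := by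
  ext w
  simp only [mem_neighborSet, addEdge_adj, Set.mem_insert_iff]
  grind

theorem isBipartiteWith_addEdge (h : G.IsBipartiteWith U V) (ha : a ∈ U) (hb : b ∈ V) :
    (addEdge G a b).IsBipartiteWith U V where
  disjoint := h.disjoint
  mem_of_adj c d hcd := by
    obtain hcd | ⟨⟨rfl, rfl⟩ | ⟨rfl, rfl⟩, -⟩ := addEdge_adj.1 hcd
    · exact h.mem_of_adj hcd
    · exact .inl ⟨ha, hb⟩
    · exact .inr ⟨hb, ha⟩

theorem isBipartiteWith_union_singleton (h : G.IsBipartiteWith U V) (hy : y ∉ V) :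
    G.IsBipartiteWith (U ∪ {y}) V where
  disjoint := Set.disjoint_union_left.2 ⟨h.disjoint, Set.disjoint_singleton_left.2 hy⟩
  mem_of_adj _ _ hab := (h.mem_of_adj hab).imp (And.imp_left .inl) (And.imp_right .inl)

namespace IsDominatingEdge

theorem right_mem (h : IsDominatingEdge G u v U V) : v ∈ V :=
  h.isBipartiteWith.mem_of_mem_adj h.left_mem h.adj

theorem mem_union_of_adj (h : IsDominatingEdge G u v U V) (hab : G.Adj a b) : a ∈ U ∪ V :=
  (h.isBipartiteWith.mem_of_adj hab).imp And.left And.left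

theorem reachable_iff (h : IsDominatingEdge G u v U V) : G.Reachable a u ↔ a ∈ U ∪ V := by
  refine ⟨fun ⟨p⟩ ↦ ?_, fun ha ↦ ?_⟩
  · cases p with
    | nil => exact .inl h.left_mem
    | cons hadj _ => exact h.mem_union_of_adj hadj
  · obtain ⟨z, hvz | huz, haz⟩ := h.exists_adj a ha
    · exact haz.reachable.trans (hvz.symm.reachable.trans h.adj.symm.reachable)
    · exact haz.reachable.trans huz.symm.reachable

theorem exists_adj_of_le (h : IsDominatingEdge G u v U V) (hle : G ≤ H) {w : α} (hw : w ∈ U ∪ V) :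
    ∃ z ∈ H.neighborSet v ∪ H.neighborSet u, H.Adj w z := by
  obtain ⟨z, hz, hwz⟩ := h.exists_adj w hw
  exact ⟨z, hz.imp (hle ·) (hle ·), hle hwz⟩

theorem addEdge_of_mem (h : IsDominatingEdge G u v U V) (ha : a ∈ U) (hb : b ∈ V) :
    IsDominatingEdge (addEdge G a b) u v U V where
  isBipartiteWith := isBipartiteWith_addEdge h.isBipartiteWith ha hb
  left_mem := h.left_mem
  adj := le_addEdge h.adj
  exists_adj _ hw := h.exists_adj_of_le le_addEdge hw

theorem addEdge_union_singleton (h : IsDominatingEdge G u v U V) (hux : G.Adj u x) (hy : y ∉ V) :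
    IsDominatingEdge (addEdge G x y) u v (U ∪ {y}) V := by
  have hx : x ∈ V := h.isBipartiteWith.mem_of_mem_adj h.left_mem hux
  refine ⟨?_, .inl h.left_mem, le_addEdge h.adj, ?_⟩
  · rw [addEdge_comm]
    exact isBipartiteWith_addEdge (isBipartiteWith_union_singleton h.isBipartiteWith hy)
      (.inr rfl) hx
  · rintro w ((hw | rfl) | hw)
    · exact h.exists_adj_of_le le_addEdge (.inl hw)
    · exact ⟨x, .inr (le_addEdge hux), (addEdge_adj_self (ne_of_mem_of_not_mem hx hy)).symm⟩
    · exact h.exists_adj_of_le le_addEdge (.inr hw)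

end IsDominatingEdge

theorem GammaGood.isDominatingEdge (h : GammaGood γ G u v U V) : IsDominatingEdge G u v U V := by
  obtain ⟨huv, hu, -, hdisj, hcomp, hsupp, hU, hV, hdom, -⟩ := h
  have mem_union {a b : α} (hab : G.Adj a b) : a ∈ U ∪ V :=
    hsupp.subset (hcomp.unique ⟨a, b, hab, rfl⟩ ⟨u, v, huv, rfl⟩)
  refine ⟨⟨hdisj, fun a b hab ↦ ?_⟩, hu, huv, hdom⟩
  rcases mem_union hab, mem_union hab.symm with ⟨ha | ha, hb | hb⟩
  · exact absurd hab (hU a ha b hb)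
  · exact .inl ⟨ha, hb⟩
  · exact .inr ⟨ha, hb⟩
  · exact absurd hab (hV a ha b hb)

theorem gammaGood_iff :
    GammaGood γ G u v U V ↔ IsDominatingEdge G u v U V ∧ IsBalanced γ G u v U V := by
  refine ⟨fun h ↦ ⟨h.isDominatingEdge, ?_⟩, fun ⟨hdom, hbal⟩ ↦ ?_⟩
  · obtain ⟨-, -, -, -, -, -, -, -, -, hbU, hbV, hsum⟩ := h
    exact ⟨hbU, hbV, hsum⟩
  have hbip := hdom.isBipartiteWith
  refine ⟨hdom.adj, hdom.left_mem, hdom.right_mem, hbip.disjoint,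
    ⟨G.connectedComponentMk u, ⟨u, v, hdom.adj, rfl⟩, ?_⟩, ?_, fun a ha b hb hab ↦ ?_,
    fun a ha b hb hab ↦ ?_, hdom.exists_adj, hbal.bU_nonpos, hbal.bV_nonpos, hbal.bU_add_bV_le⟩
  · rintro _ ⟨a, b, hab, rfl⟩
    exact ConnectedComponent.sound (hdom.reachable_iff.2 (hdom.mem_union_of_adj hab))
  · ext w
    exact ConnectedComponent.eq.trans hdom.reachable_iff
  · exact Set.disjoint_left.1 hbip.disjoint hb (hbip.mem_of_mem_adj ha hab)
  · exact Set.disjoint_left.1 hbip.disjoint (hbip.mem_of_mem_adj' hb hab) ha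

theorem bV_eq_bU : bV γ G v U V = bU γ G v V U :=
  rfl

theorem bU_anti (hV : V.Finite) (hle : G ≤ H) : bU γ H u U V ≤ bU γ G u U V := by
  have hcard : (V \ H.neighborSet u).ncard ≤ (V \ G.neighborSet u).ncard :=
    Set.ncard_le_ncard (Set.sdiff_subset_sdiff_right (neighborSet_mono hle u)) hV.sdiff
  unfold bU
  gcongr

theorem bU_addEdge_left (hV : V.Finite) (hab : a ≠ b) (hb : b ∈ V \ G.neighborSet a) :
    bU γ (addEdge G a b) a U V = bU γ G a U V - 1 := by
  have hcard : (V \ (addEdge G a b).neighborSet a).ncard + 1 = (V \ G.neighborSet a).ncard := by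
    rw [neighborSet_addEdge_left hab, Set.insert_eq, Set.union_comm, ← Set.sdiff_sdiff]
    exact Set.ncard_sdiff_singleton_add_one hb hV.sdiff
  unfold bU
  rw [← hcard]
  push_cast
  ring

theorem bU_union_singleton_left (hU : U.Finite) (hy : y ∉ U) :
    bU γ G u (U ∪ {y}) V = bU γ G u U V + 1 := by
  unfold bU
  rw [Set.union_singleton, Set.ncard_insert_of_notMem hy hU]
  push_cast
  ring

theorem bU_union_singleton_right_le (hV : V.Finite) (hy : y ∉ V) :
    bU γ G u U (V ∪ {y}) ≤ bU γ G u U V + 1 - γ := by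
  have hcard : ((V ∪ {y}) \ G.neighborSet u).ncard ≤ (V \ G.neighborSet u).ncard + 1 := by
    rw [Set.union_sdiff_distrib]
    refine (Set.ncard_union_le _ _).trans (Nat.add_le_add_left ?_ _)
    exact (Set.ncard_le_ncard Set.sdiff_subset).trans_eq (Set.ncard_singleton y)
  rify at hcard
  unfold bU
  rw [Set.union_singleton, Set.ncard_insert_of_notMem hy hV, ← Set.union_singleton]
  push_cast
  linarith

theorem bU_of_subset_neighborSet (h : V ⊆ G.neighborSet u) :
    bU γ G u U V = U.ncard - γ * V.ncard - 1 / (γ - 1) := by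
  simp [bU, Set.sdiff_eq_empty.2 h]

namespace IsBalanced

theorem addEdge_left (h : IsBalanced γ G u v U V) (hγ : 1 ≤ γ) (hU : U.Finite) (hV : V.Finite)
    (hle : G ≤ H) (hy : y ∉ U) (hub : u ≠ b) (hb : b ∈ V \ H.neighborSet u) :
    IsBalanced γ (addEdge H u b) u v (U ∪ {y}) V := by
  have hbU : bU γ (addEdge H u b) u (U ∪ {y}) V ≤ bU γ G u U V := by
    rw [bU_addEdge_left hV hub hb, bU_union_singleton_left hU hy, add_sub_cancel_right]
    exact bU_anti hV hle
  have hbV : bV γ (addEdge H u b) v (U ∪ {y}) V ≤ bV γ G v U V + 1 - γ :=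
    (bU_union_singleton_right_le hU hy).trans
      (by gcongr; exact bU_anti hU (hle.trans le_addEdge))
  obtain ⟨hbU₀, hbV₀, hsum₀⟩ := h
  constructor <;> linarith

theorem addEdge_right (h : IsBalanced γ G u v U V) (hγ : 1 ≤ γ) (hU : U.Finite) (hV : V.Finite)
    (hle : G ≤ H) (hy : y ∉ U) (hVu : V ⊆ H.neighborSet u)
    (hcard : ((U ∪ {y}).ncard : ℝ) ≤ γ * V.ncard + 1 / (γ - 1)) (hcv : c ≠ v)
    (hc : c ∈ (U ∪ {y}) \ H.neighborSet v) :
    IsBalanced γ (addEdge H c v) u v (U ∪ {y}) V := by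
  have hle' : H ≤ addEdge H c v := le_addEdge
  have hbU : bU γ (addEdge H c v) u (U ∪ {y}) V ≤ 0 := by
    rw [bU_of_subset_neighborSet (hVu.trans (neighborSet_mono hle' u))]
    linarith
  have hbU' : bU γ (addEdge H c v) u (U ∪ {y}) V ≤ bU γ G u U V + 1 := by
    rw [bU_union_singleton_left hU hy]
    gcongr
    exact bU_anti hV (hle.trans hle')
  have hbV : bV γ (addEdge H c v) v (U ∪ {y}) V ≤ bV γ G v U V - γ := by
    have hfin : (U ∪ {y}).Finite := hU.union (Set.finite_singleton y)
    have hanti : bU γ H v V U ≤ bV γ G v U V := bU_anti hU hle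
    calc bV γ (addEdge H c v) v (U ∪ {y}) V
      _ = bU γ H v V (U ∪ {y}) - 1 := by
        rw [bV_eq_bU, addEdge_comm, bU_addEdge_left hfin hcv.symm hc]
      _ ≤ bU γ H v V U + 1 - γ - 1 := by gcongr; exact bU_union_singleton_right_le hU hy
      _ ≤ bV γ G v U V - γ := by linarith
  obtain ⟨-, hbV₀, hsum₀⟩ := h
  constructor <;> linarith

end IsBalanced

end

theorem stmt_19_general {α : Type*} (γ : ℝ) (hγ1 : 1 < γ)
    (G : SimpleGraph α) (u v : α) (U V : Set α) (hU : U.Finite) (hV : V.Finite)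
    (hg : GammaGood γ G u v U V)
    (x y : α) (hx : x ∈ V) (hy : y ∉ U ∪ V)
    (hne : ((U ∪ {y}) \ (addEdge G x y).neighborSet v) ∪
        (V \ (addEdge G x y).neighborSet u) ≠ ∅)
    (h1 : ((U ∪ {y}).ncard : ℝ) ≤ γ * V.ncard + 1 / (γ - 1)) :
    ∃ a b : α, a ≠ b ∧ ¬ (addEdge G x y).Adj a b ∧
      GammaGood γ (addEdge (addEdge G x y) a b) u v (U ∪ {y}) V := by
  obtain ⟨hdom, hbal⟩ := gammaGood_iff.1 hg
  obtain ⟨hyU, hyV⟩ := not_or.1 hy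
  have hdisj := hdom.isBipartiteWith.disjoint
  have hux : u ≠ x := hdisj.ne_of_mem hdom.left_mem hx
  have huy : u ≠ y := ne_of_mem_of_not_mem hdom.left_mem hyU
  by_cases hVu : V ⊆ (addEdge G x y).neighborSet u
  · rw [Set.sdiff_eq_empty.2 hVu, Set.union_empty] at hne
    obtain ⟨c, hc⟩ := Set.nonempty_iff_ne_empty.2 hne
    have hdom' := hdom.addEdge_union_singleton ((addEdge_adj_of_ne hux huy).1 (hVu hx)) hyV
    have hcv : c ≠ v := hdom'.isBipartiteWith.disjoint.ne_of_mem hc.1 hdom.right_mem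
    exact ⟨c, v, hcv, fun hadj ↦ hc.2 hadj.symm,
      gammaGood_iff.2 ⟨hdom'.addEdge_of_mem hc.1 hdom.right_mem,
        hbal.addEdge_right hγ1.le hU hV le_addEdge hyU hVu h1 hcv hc⟩⟩
  · obtain ⟨b, hb, hbx⟩ :
        ∃ b ∈ V \ (addEdge G x y).neighborSet u, (addEdge G u b).Adj u x := by
      by_cases hadj : G.Adj u x
      · obtain ⟨b, hb⟩ := Set.sdiff_nonempty.2 hVu
        exact ⟨b, hb, le_addEdge hadj⟩
      · exact ⟨x, ⟨hx, mt (addEdge_adj_of_ne hux huy).1 hadj⟩, addEdge_adj_self hux⟩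
    have hub : u ≠ b := hdisj.ne_of_mem hdom.left_mem hb.1
    refine ⟨u, b, hub, hb.2,
      gammaGood_iff.2 ⟨?_, hbal.addEdge_left hγ1.le hU hV le_addEdge hyU hub hb⟩⟩
    -- `x` may become a neighbor of `u` only through `ub`, so `y` has to be attached second.
    rw [addEdge_right_comm]
    exact (hdom.addEdge_of_mem hdom.left_mem hb.1).addEdge_union_singleton hbx hyV

theorem stmt_19 {α : Type*} [Fintype α] (γ : ℝ) (hγ1 : 1 < γ) (hγ2 : γ ≤ 2)
    (G : SimpleGraph α) (u v : α) (U V : Set α)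
    (hg : GammaGood γ G u v U V)
    (x y : α) (hx : x ∈ V) (hy : y ∉ U ∪ V)
    (hne : ((U ∪ {y}) \ (addEdge G x y).neighborSet v) ∪
        (V \ (addEdge G x y).neighborSet u) ≠ ∅)
    (h1 : ((U ∪ {y}).ncard : ℝ) ≤ γ * V.ncard + 1 / (γ - 1))
    (h2 : (V.ncard : ℝ) ≤ γ * (U ∪ {y}).ncard + 1 / (γ - 1)) :
    ∃ a b : α, a ≠ b ∧ ¬ (addEdge G x y).Adj a b ∧
      GammaGood γ (addEdge (addEdge G x y) a b) u v (U ∪ {y}) V := by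
  exact stmt_19_general γ hγ1 G u v U V U.toFinite V.toFinite hg x y hx hy hne h1
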